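/- Let q̃ ∈ L^∞(ℝ, ℂ) be a bounded measurable function with support contained in [0,1], and let Lq̃(τ) = ∫_0^1 e^{−tτ} q̃(t) dt. Suppose there is a constant C̃ > 0 such that |Lq̃(τ)| ≤ e^{−τ/C̃} for all real τ > 0. Then q̃ vanishes in a neighborhood of 0: q̃(t) = 0 for almost every t ∈ [0, 1/C̃). -/

import Mathlib

open MeasureTheory

/-!
Fix `x ≤ b`. Averaging `f` against `t ↦ 1 - exp (-exp (s (x - t)) / s)` gives, after expanding the
outer exponential, a series in the Laplace integrals of `f` at the points `s, 2s, 3s, …`, which the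
decay `O(exp (-bτ))` bounds by a multiple of `exp (exp (s (x - b)) / s) - 1 → 0` as `s → ∞`.
The weights themselves converge boundedly to the indicator of `t < x`, so `∫_{t < x} f = 0`; as the
half-lines `(-∞, x)` generate the Borel sets, `f` vanishes almost everywhere on `(-∞, b)`.
-/

open Filter Real Set Topology

open scoped Nat

theorem ae_eq_zero_of_forall_setIntegral_Iio_eq_zero {α E : Type*} [TopologicalSpace α]
    [SecondCountableTopology α] [LinearOrder α] [OrderTopology α] [MeasurableSpace α] [BorelSpace α]
    [NormedAddCommGroup E] [NormedSpace ℝ E] [CompleteSpace E] {μ : Measure α} {f : α → E}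
    (hf : Integrable f μ) (h_univ : ∫ t, f t ∂μ = 0) (h_Iio : ∀ x, ∫ t in Iio x, f t ∂μ = 0) :
    f =ᵐ[μ] 0 := by
  refine hf.ae_eq_of_withDensityᵥ_eq (integrable_zero α E μ) ?_
  rw [withDensityᵥ_zero]
  refine VectorMeasure.ext_of_generateFrom (range Iio) ?_
    (BorelSpace.measurable_eq.trans (borel_eq_generateFrom_Iio α)) isPiSystem_Iio ?_
  · rintro _ ⟨x, rfl⟩
    simpa [withDensityᵥ_apply hf measurableSet_Iio] using h_Iio x
  · simpa [withDensityᵥ_apply hf MeasurableSet.univ] using h_univ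

/-- A smooth approximation, as `s → ∞`, of the indicator function of `u > 0`. It is an entire
function of `exp (s * u)`, and the division by `s` makes it tend to `0` at `u = 0`. -/
noncomputable def expCutoff (s u : ℝ) : ℝ := 1 - exp (-(exp (s * u) / s))

/-- The coefficient of `exp (-((n + 1) * s * t))` in the expansion of `expCutoff s (x - t)`. -/
noncomputable def expCutoffCoeff (s x : ℝ) (n : ℕ) : ℝ :=
  -((-(exp (s * x) / s)) ^ (n + 1) / (n + 1)!)

/-- The Laplace transform, at the real point `τ`, of the vector measure with density `f` with
respect to `μ`. -/
noncomputable def laplaceIntegral {E : Type*} [NormedAddCommGroup E] [NormedSpace ℝ E]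
    (μ : Measure ℝ) (f : ℝ → E) (τ : ℝ) : E :=
  ∫ t, exp (-(τ * t)) • f t ∂μ

section Cutoff

variable {s u : ℝ}

theorem continuous_expCutoff : Continuous (expCutoff s) := by
  unfold expCutoff
  fun_prop

theorem abs_expCutoff_le_one (hs : 0 ≤ s) : |expCutoff s u| ≤ 1 := by
  have h_pos := exp_pos (-(exp (s * u) / s))
  have h_le : exp (-(exp (s * u) / s)) ≤ 1 := exp_le_one_iff.2 (neg_nonpos.2 (by positivity))
  rw [expCutoff, abs_le]
  constructor <;> linarith

theorem tendsto_exp_mul_div_nhds_zero (hu : u ≤ 0) :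
    Tendsto (fun s : ℝ => exp (s * u) / s) atTop (𝓝 0) := by
  refine squeeze_zero' ?_ ?_ tendsto_inv_atTop_zero
  all_goals filter_upwards [eventually_gt_atTop (0 : ℝ)] with s hs
  · positivity
  · rw [inv_eq_one_div]
    gcongr
    exact exp_le_one_iff.2 (mul_nonpos_of_nonneg_of_nonpos hs.le hu)

theorem tendsto_expCutoff_of_nonpos (hu : u ≤ 0) :
    Tendsto (fun s => expCutoff s u) atTop (𝓝 0) := by
  simpa [expCutoff] using (tendsto_exp_mul_div_nhds_zero hu).neg.rexp.const_sub 1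

theorem tendsto_expCutoff_of_pos (hu : 0 < u) :
    Tendsto (fun s => expCutoff s u) atTop (𝓝 1) := by
  have h_atTop : Tendsto (fun s : ℝ => exp (s * u) / s) atTop atTop := by
    simpa [mul_comm] using tendsto_exp_mul_div_rpow_atTop 1 u hu
  simpa [Function.comp_def, expCutoff] using
    (tendsto_exp_neg_atTop_nhds_zero.comp h_atTop).const_sub 1

end Cutoff

section Expansion

theorem hasSum_pow_succ_div_factorial (y : ℝ) :
    HasSum (fun n : ℕ => y ^ (n + 1) / (n + 1)!) (exp y - 1) := by
  have h_exp : HasSum (fun n : ℕ => y ^ n / n !) (exp y) := by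
    simpa only [exp_eq_exp_ℝ] using NormedSpace.expSeries_div_hasSum_exp y
  simpa using (hasSum_nat_add_iff' 1).2 h_exp

theorem exp_mul_sub_div_pow_succ (s x t : ℝ) (n : ℕ) :
    (exp (s * (x - t)) / s) ^ (n + 1) =
      (exp (s * x) / s) ^ (n + 1) * exp (-((n + 1) * s * t)) := by
  have h_exp : exp (-((n + 1) * s * t)) = exp (-(s * t)) ^ (n + 1) := by
    rw [← exp_nat_mul]
    push_cast
    ring_nf
  rw [h_exp, ← mul_pow, div_mul_eq_mul_div, ← exp_add]
  ring_nf

theorem hasSum_expCutoffCoeff_mul_exp (s x t : ℝ) :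
    HasSum (fun n : ℕ => expCutoffCoeff s x n * exp (-((n + 1) * s * t)))
      (expCutoff s (x - t)) := by
  convert! (hasSum_pow_succ_div_factorial (-(exp (s * (x - t)) / s))).neg using 1
  · ext n
    rw [expCutoffCoeff, neg_pow, neg_pow (exp (s * (x - t)) / s), exp_mul_sub_div_pow_succ]
    ring
  · rw [expCutoff, neg_sub]

theorem hasSum_abs_expCutoffCoeff_mul_exp {s : ℝ} (hs : 0 ≤ s) (x t : ℝ) :
    HasSum (fun n : ℕ => |expCutoffCoeff s x n| * exp (-((n + 1) * s * t)))
      (exp (exp (s * (x - t)) / s) - 1) := by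
  convert! hasSum_pow_succ_div_factorial (exp (s * (x - t)) / s) using 2 with n
  rw [expCutoffCoeff, abs_neg, abs_div, abs_pow, abs_neg, Nat.abs_cast,
    abs_of_nonneg (by positivity : 0 ≤ exp (s * x) / s), exp_mul_sub_div_pow_succ]
  ring

end Expansion

section LaplaceIntegral

variable {E : Type*} [NormedAddCommGroup E] [NormedSpace ℝ E] {μ : Measure ℝ} {f : ℝ → E}
  {a b x s C : ℝ}

theorem hasSum_expCutoffCoeff_smul_laplaceIntegral (hf : Integrable f μ) (ha : ∀ᵐ t ∂μ, a ≤ t)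
    (hs : 0 ≤ s) (x : ℝ) :
    HasSum (fun n : ℕ => expCutoffCoeff s x n • laplaceIntegral μ f ((n + 1) * s))
      (∫ t, expCutoff s (x - t) • f t ∂μ) := by
  have h_coeff := hasSum_abs_expCutoffCoeff_mul_exp hs x a
  simp only [laplaceIntegral, ← integral_smul, ← mul_smul]
  refine hasSum_integral_of_dominated_convergence
    (fun n t => |expCutoffCoeff s x n| * exp (-((n + 1) * s * a)) * ‖f t‖) (fun n => ?_)
    (fun n => ?_) (.of_forall fun t => h_coeff.summable.mul_right _) ?_
    (.of_forall fun t => (hasSum_expCutoffCoeff_mul_exp s x t).smul_const (f t))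
  · have h_cont : Continuous fun t => expCutoffCoeff s x n * exp (-((n + 1) * s * t)) := by fun_prop
    exact h_cont.aestronglyMeasurable.smul hf.aestronglyMeasurable
  · filter_upwards [ha] with t hat
    rw [norm_smul, norm_mul, norm_eq_abs, norm_eq_abs, abs_exp]
    gcongr
  · simpa only [tsum_mul_right] using hf.norm.const_mul _

theorem norm_integral_expCutoff_smul_le (hf : Integrable f μ) (ha : ∀ᵐ t ∂μ, a ≤ t) (hs : 0 ≤ s)
    (hC : ∀ τ, s ≤ τ → ‖laplaceIntegral μ f τ‖ ≤ C * exp (-(τ * b))) (x : ℝ) :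
    ‖∫ t, expCutoff s (x - t) • f t ∂μ‖ ≤ C * (exp (exp (s * (x - b)) / s) - 1) := by
  refine (hasSum_expCutoffCoeff_smul_laplaceIntegral hf ha hs x).norm_le_of_bounded
    ((hasSum_abs_expCutoffCoeff_mul_exp hs x b).mul_left C) fun n => ?_
  have h_le : s ≤ (n + 1) * s := le_mul_of_one_le_left hs (by simp)
  calc ‖expCutoffCoeff s x n • laplaceIntegral μ f ((n + 1) * s)‖
      ≤ |expCutoffCoeff s x n| * (C * exp (-((n + 1) * s * b))) := by
        rw [norm_smul, norm_eq_abs]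
        gcongr
        exact hC _ h_le
    _ = C * (|expCutoffCoeff s x n| * exp (-((n + 1) * s * b))) := by ring

theorem tendsto_integral_expCutoff_smul (hf : Integrable f μ) (x : ℝ) :
    Tendsto (fun s => ∫ t, expCutoff s (x - t) • f t ∂μ) atTop (𝓝 (∫ t in Iio x, f t ∂μ)) := by
  rw [← integral_indicator measurableSet_Iio]
  refine tendsto_integral_filter_of_dominated_convergence (fun t => ‖f t‖) ?_ ?_ hf.norm ?_
  · refine .of_forall fun s => ?_
    have h_cont : Continuous fun t => expCutoff s (x - t) :=
      continuous_expCutoff.comp (continuous_sub_left x)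
    exact h_cont.aestronglyMeasurable.smul hf.aestronglyMeasurable
  · filter_upwards [eventually_ge_atTop 0] with s hs
    refine .of_forall fun t => ?_
    rw [norm_smul]
    exact mul_le_of_le_one_left (norm_nonneg _) (abs_expCutoff_le_one hs)
  · refine .of_forall fun t => ?_
    rcases lt_or_ge t x with htx | hxt
    · simpa [htx] using (tendsto_expCutoff_of_pos (sub_pos.2 htx)).smul_const (f t)
    · simpa [hxt.not_gt] using (tendsto_expCutoff_of_nonpos (sub_nonpos.2 hxt)).smul_const (f t)

theorem setIntegral_Iio_eq_zero_of_laplaceIntegral_isBigO (hf : Integrable f μ)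
    (ha : ∀ᵐ t ∂μ, a ≤ t) (hdec : laplaceIntegral μ f =O[atTop] fun τ => exp (-(τ * b)))
    (hx : x ≤ b) : ∫ t in Iio x, f t ∂μ = 0 := by
  obtain ⟨C, hC⟩ := hdec.bound
  have h_bound : ∀ᶠ s in atTop,
      ‖∫ t, expCutoff s (x - t) • f t ∂μ‖ ≤ C * (exp (exp (s * (x - b)) / s) - 1) := by
    filter_upwards [eventually_forall_ge_atTop.2 hC, eventually_ge_atTop 0] with s hCs hs
    refine norm_integral_expCutoff_smul_le hf ha hs (fun τ hτ => ?_) x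
    simpa only [norm_eq_abs, abs_exp] using hCs τ hτ
  have h_zero : Tendsto (fun s => C * (exp (exp (s * (x - b)) / s) - 1)) atTop (𝓝 0) := by
    simpa using
      ((tendsto_exp_mul_div_nhds_zero (sub_nonpos.2 hx)).rexp.sub_const 1).const_mul C
  exact tendsto_nhds_unique (tendsto_integral_expCutoff_smul hf x)
    (squeeze_zero_norm' h_bound h_zero)

theorem stmt_7_general [CompleteSpace E] (hf : Integrable f μ) (ha : ∀ᵐ t ∂μ, a ≤ t)
    (hdec : laplaceIntegral μ f =O[atTop] fun τ => exp (-(τ * b))) :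
    ∀ᵐ t ∂μ.restrict (Iio b), f t = 0 := by
  refine ae_eq_zero_of_forall_setIntegral_Iio_eq_zero hf.integrableOn
    (setIntegral_Iio_eq_zero_of_laplaceIntegral_isBigO hf ha hdec le_rfl) fun x => ?_
  rw [Measure.restrict_restrict measurableSet_Iio, Iio_inter_Iio]
  exact setIntegral_Iio_eq_zero_of_laplaceIntegral_isBigO hf ha hdec inf_le_right

end LaplaceIntegral

theorem intervalIntegral_cexp_mul_eq_laplaceIntegral {c d : ℝ} (hcd : c ≤ d) (f : ℝ → ℂ) (τ : ℝ) :
    ∫ t in c..d, Complex.exp (-((t : ℂ) * (τ : ℂ))) * f t =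
      laplaceIntegral (volume.restrict (Icc c d)) f τ := by
  rw [laplaceIntegral, intervalIntegral.integral_of_le hcd, integral_Icc_eq_integral_Ioc]
  simp [mul_comm τ]

/-- Let `q̃ ∈ L^∞(ℝ, ℂ)` be supported in `[0,1]` and suppose its
Laplace transform satisfies `|Lq̃(τ)| ≤ e^{-τ/C̃}` for all real `τ > 0`. Then `q̃`
vanishes in a neighborhood of `0`: `q̃(t) = 0` for a.e. `t ∈ [0, 1/C̃)`. -/
theorem stmt_7 (qt : ℝ → ℂ) (hmeas : Measurable qt) (M₀ : ℝ)
    (hbdd : ∀ t : ℝ, ‖qt t‖ ≤ M₀)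
    (hsupp : ∀ t : ℝ, t ∉ Set.Icc (0:ℝ) 1 → qt t = 0)
    (Ct : ℝ) (hCt : 0 < Ct)
    (hdec : ∀ τ : ℝ, 0 < τ →
      ‖∫ t in (0:ℝ)..1, Complex.exp (-((t : ℂ) * (τ : ℂ))) * qt t‖ ≤ Real.exp (-τ / Ct)) :
    ∀ᵐ t ∂(volume.restrict (Set.Ico (0:ℝ) (1 / Ct))), qt t = 0 := by
  have h_int : IntegrableOn qt (Icc 0 1) :=
    Measure.integrableOn_of_bounded measure_Icc_lt_top.ne hmeas.aestronglyMeasurable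
      (.of_forall hbdd)
  have h_decay : laplaceIntegral (volume.restrict (Icc 0 1)) qt
      =O[atTop] fun τ => exp (-(τ * (1 / Ct))) := by
    refine .of_bound 1 ((eventually_gt_atTop 0).mono fun τ hτ => ?_)
    simpa [intervalIntegral_cexp_mul_eq_laplaceIntegral, neg_div, div_eq_mul_inv] using hdec τ hτ
  have h_nonneg : ∀ᵐ t ∂volume.restrict (Icc (0 : ℝ) 1), 0 ≤ t :=
    ae_restrict_of_forall_mem measurableSet_Icc fun t ht => ht.1
  have h_zero := stmt_7_general h_int h_nonneg h_decay
  rw [Measure.restrict_comm measurableSet_Iio] at h_zero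
  exact ae_restrict_of_ae_restrict_of_subset Ico_subset_Iio_self
    (ae_of_ae_restrict_of_ae_restrict_compl (Icc 0 1) h_zero
      (ae_restrict_of_forall_mem measurableSet_Icc.compl hsupp))
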